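/- For all n, k, i, the number of permutations σ ∈ S_n with lec(σ) = i whose rightmost hook in the hook factorization has length at least n−k equals the number of permutations σ ∈ S_n with des(σ) = i whose special reverse wave srw(σ) has length at least n−k. -/

import Mathlib

/-!
Both sides are computed as coefficients of generating polynomials over words whose letters form a
finite set `S` of positive integers, with `n = #S`, and both satisfy the same recursion.

Hooks. Splitting off the rightmost hook, of length `l` and with set of letters `T`, leaves an
arbitrary word on `S \ T`; the hooks on `T` have inversion polynomial `X + ⋯ + X^(l-1)`
(`hookPoly l`). Hence the words whose rightmost hook has length at least `L` have `lec`-polynomial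
`1 + ∑_{l = L}^{n} ∑_{#T = l} hookPoly l * lecPoly (S \ T)` (`sum_le_lastHook`), where the `1`
comes from the increasing word.

Special reverse waves. For `L ≥ 1`, the special reverse wave of `w` has length at least `L` exactly
when the letters before position `L` are first the ones smaller than `w_L`, increasing, and then the
ones larger than `w_L`, decreasing. Such a word is therefore determined by its suffix
`ρ = w_L ⋯ w_n`, and its number of descents is `des ρ` plus the number of letters outside `ρ`
larger than `w_L` (`weight S ρ`); this is `sum_le_srw`. For a fixed `τ = w_{L+1} ⋯ w_n`, summing
over the possible letters `w_L` gives `X^(des τ) * hookPoly L + X^(weight S τ)`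
(`sum_prepend`, `sum_weight_cons`). Induction on the length of `ρ` yields the same formula as
above with `desPoly` in place of `lecPoly` (`sum_le_srw'`).

Taking `L = 0`, strong induction on `S` gives `lecPoly S = desPoly S` (only proper subsets occur on
the right, because `hookPoly 0 = 0`), and then the two formulas agree for every `L`.
-/

namespace Paper

/-- number of descents of a word -/
def des : List ℕ → ℕ
  | a :: b :: t => (if b < a then 1 else 0) + des (b :: t)
  | _ => 0

/-- number of inversions of a word -/
def inv : List ℕ → ℕ
  | [] => 0
  | a :: t => (t.countP fun x => decide (x < a)) + inv t

/-- a word is (strictly) increasing -/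
def Incr (w : List ℕ) : Prop := w.Chain' (· < ·)

/-- a word is a hook: `a₁ > a₂` and `a₂ < a₃ < ⋯ < a_s`, length ≥ 2 -/
def IsHook : List ℕ → Prop
  | a :: b :: t => b < a ∧ (b :: t).Chain' (· < ·)
  | _ => False

/-- `(γ, hs)` is the hook factorization data of `w` -/
def IsHookFact (w γ : List ℕ) (hs : List (List ℕ)) : Prop :=
  Incr γ ∧ (∀ h ∈ hs, IsHook h) ∧ w = γ ++ hs.flatten

/-- the statistic `lec` computed from the hooks of a factorization -/
def lecVal (hs : List (List ℕ)) : ℕ := (hs.map inv).sum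

/-- one-line word of `σ ∈ S_n`, with entries in `[1..n]` -/
def word {n : ℕ} (σ : Equiv.Perm (Fin n)) : List ℕ :=
  List.ofFn fun i => (σ i : ℕ) + 1

/-- a word `w₁ ⋯ w_ℓ` with maximum in position `c` is a (nontrivial) reverse wave if
`c ≠ ℓ` and `w₁ < ⋯ < w_{c-1} < w_ℓ < w_{ℓ-1} < ⋯ < w_c`. -/
def IsRevWave (w : List ℕ) : Prop :=
  ∃ c, c + 1 < w.length ∧ (w.take c ++ (w.drop c).reverse).Chain' (· < ·)

/-- a word `w₁ ⋯ w_ℓ` with maximum in position `c` is a (nontrivial) wave if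
`c ≠ ℓ` and `w_ℓ < w_{ℓ-1} < ⋯ < w_{c+1} < w₁ < ⋯ < w_c`. -/
def IsWave (w : List ℕ) : Prop :=
  ∃ c, c + 1 < w.length ∧ ((w.drop (c + 1)).reverse ++ w.take (c + 1)).Chain' (· < ·)

/-- the maximal strictly decreasing run starting below `hi` and staying above `lo` -/
def decRun (hi lo : ℕ) : List ℕ → List ℕ
  | [] => []
  | b :: t => if b < hi ∧ lo < b then b :: decRun b lo t else []

def srwAux (lo : ℕ) : List ℕ → List ℕ
  | [] => []
  | [a] => [a]
  | a :: b :: t => if a < b then a :: srwAux a (b :: t) else a :: decRun a lo (b :: t)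

/-- the special reverse wave of a word: the prefix `w₁ ⋯ w_s` where `t` is the position of the
first descent (the whole word if none) and `s ≥ t` is maximal with
`w_t > w_{t+1} > ⋯ > w_s > w_{t-1}` (convention `w₀ = 0`). -/
def srw (w : List ℕ) : List ℕ := srwAux 0 w

/-- the number of special reverse descents: `des (srw w) + χ(w_s > w_{s+1})` -/
def srdes (w : List ℕ) : ℕ :=
  des (srw w) +
    match (srw w).getLast?, (w.drop (srw w).length).head? with
    | some x, some y => if y < x then 1 else 0
    | _, _ => 0

/-- the prefix `w₁ ⋯ w_t` of `w` ending at the position `t` of the first descent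
(the whole word if there is no descent) -/
def incrPrefix : List ℕ → List ℕ
  | [] => []
  | [a] => [a]
  | a :: b :: t => if a < b then a :: incrPrefix (b :: t) else [a]

/-- the special wave `w_r ⋯ w_t ⋯ w_s` of a word -/
def sw (w : List ℕ) : List ℕ :=
  let pre := incrPrefix w
  match w.drop pre.length with
  | [] => w
  | x :: rs =>
    let kept := pre.takeWhile fun u => decide (u < x)
    pre.drop kept.length ++ x :: decRun x (kept.getLastD 0) rs

/-- the word `w \ sw(w) = w₁ ⋯ w_{r-1} w_{s+1} ⋯ w_ℓ` obtained removing the special wave -/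
def swCompl (w : List ℕ) : List ℕ :=
  let pre := incrPrefix w
  match w.drop pre.length with
  | [] => []
  | x :: rs =>
    let kept := pre.takeWhile fun u => decide (u < x)
    kept ++ rs.drop (decRun x (kept.getLastD 0) rs).length

/-- insertion `ins(a,b) = a₁ ⋯ a_x b₁ ⋯ b_q a_{x+1} ⋯ a_p`, where `x` is maximal with
`a₁ < a₂ < ⋯ < a_x < b_q` -/
def ins (a b : List ℕ) : List ℕ :=
  let pfx := (incrPrefix a).takeWhile fun u => decide (u < b.getLastD 0)
  pfx ++ b ++ a.drop pfx.length

/-- the word `ρ = ρ₁ ⋯ ρ_m` (entries in `[1..n]`) associated to an injection `Fin m ↪ Fin n` -/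
def rho {n m : ℕ} (f : Fin m ↪ Fin n) : List ℕ :=
  List.ofFn fun j => (f j : ℕ) + 1

/-- descent number of the pair `(α₀, ρ)`: `des ρ + #{a ∈ α₀ : a > ρ₁}`,
where `α₀ = [n] \ {ρ₁, …, ρ_m}` -/
def desPair (n : ℕ) {m : ℕ} (f : Fin m ↪ Fin n) : ℕ :=
  des (rho f) + ((Finset.Icc 1 n).filter fun a => a ∉ rho f ∧ (rho f).headI < a).card

/-- descent number of the pair `(α₀, ρ)`, with `ρ` given as a list -/
def desPairL (n : ℕ) (ρ : List ℕ) : ℕ :=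
  des ρ + ((Finset.Icc 1 n).filter fun a => a ∉ ρ ∧ ρ.headI < a).card

/-- the map `μ`, sending `ρ` (with complementary set `α₀ = {α₁ < ⋯ < α_{n-k-1}}`) to
`α₁ ⋯ α_{n-k-m-1} α_{n-k-1} α_{n-k-2} ⋯ α_{n-k-m} ρ₁ ⋯ ρ_{k+1}`,
where `m = #{a ∈ α₀ : a > ρ₁}` -/
def mu (n : ℕ) (ρ : List ℕ) : List ℕ :=
  let A := ((Finset.Icc 1 n).filter fun a => a ∉ ρ).sort (· ≤ ·)
  let m := (A.filter fun a => decide (ρ.headI < a)).length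
  (A.take (A.length - m) ++ (A.drop (A.length - m)).reverse) ++ ρ

end Paper
namespace Paper

open Polynomial Finset

/-! ### Injective words -/

/-- The finset of words of length `m` with distinct letters taken from `S`. -/
def words (S : Finset ℕ) (m : ℕ) : Finset (List ℕ) :=
  ((Fintype.piFinset fun _ : Fin m => S).image List.ofFn).filter List.Nodup

theorem mem_words {S : Finset ℕ} {m : ℕ} {l : List ℕ} :
    l ∈ words S m ↔ l.Nodup ∧ l.length = m ∧ ∀ x ∈ l, x ∈ S := by
  simp only [words, mem_filter, mem_image, Fintype.mem_piFinset]
  constructor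
  · rintro ⟨⟨f, hf, rfl⟩, h⟩
    refine ⟨h, by simp, ?_⟩
    intro x hx
    rw [List.mem_ofFn] at hx
    obtain ⟨i, rfl⟩ := hx
    exact hf i
  · rintro ⟨h, rfl, hS⟩
    exact ⟨⟨l.get, fun i => hS _ (List.get_mem l i), List.ofFn_get l⟩, h⟩

theorem toFinset_of_mem_words {S : Finset ℕ} {l : List ℕ} (h : l ∈ words S #S) :
    l.toFinset = S := by
  rw [mem_words] at h
  apply Finset.eq_of_subset_of_card_le
  · intro x hx
    exact h.2.2 x (by simpa using hx)
  · rw [List.toFinset_card_of_nodup h.1, h.2.1]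

theorem card_sdiff_of_mem_words {S : Finset ℕ} {m : ℕ} {l : List ℕ} (h : l ∈ words S m) :
    #(S \ l.toFinset) = #S - m := by
  rw [mem_words] at h
  rw [Finset.card_sdiff_of_subset, List.toFinset_card_of_nodup h.1, h.2.1]
  intro x hx
  exact h.2.2 x (by simpa using hx)

/-- Words of length `p + q` are split into a prefix of length `p` and a suffix of length `q`. -/
theorem sum_words_append (S : Finset ℕ) (p q : ℕ) (g : List ℕ → ℕ[X]) :
    ∑ w ∈ words S (p + q), g w =
      ∑ h ∈ words S q, ∑ u ∈ words (S \ h.toFinset) p, g (u ++ h) := by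
  rw [Finset.sum_sigma']
  refine Finset.sum_bij' (fun w _ => (⟨w.drop p, w.take p⟩ : Σ _ : List ℕ, List ℕ))
    (fun x _ => x.2 ++ x.1) ?_ ?_ ?_ ?_ ?_
  · intro w hw
    rw [mem_words] at hw
    obtain ⟨hn, hl, hS⟩ := hw
    rw [Finset.mem_sigma, mem_words, mem_words]
    have hn' := hn
    rw [← List.take_append_drop p w, List.nodup_append] at hn'
    refine ⟨⟨hn'.2.1, by simp [hl], fun x hx => hS x (List.mem_of_mem_drop hx)⟩,
      hn'.1, by simp [hl], ?_⟩
    intro x hx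
    rw [Finset.mem_sdiff, List.mem_toFinset]
    exact ⟨hS x (List.mem_of_mem_take hx), fun h => hn'.2.2 x hx x h rfl⟩
  · rintro ⟨h, u⟩ hx
    rw [Finset.mem_sigma, mem_words, mem_words] at hx
    obtain ⟨⟨h1, h2, h3⟩, h4, h5, h6⟩ := hx
    rw [mem_words]
    simp only [Finset.mem_sdiff, List.mem_toFinset] at h6
    dsimp only at *
    refine ⟨?_, by simp [h2, h5], ?_⟩
    · rw [List.nodup_append]
      refine ⟨h4, h1, ?_⟩
      rintro a ha b hb rfl
      exact (h6 a ha).2 hb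
    · intro x hx
      rcases List.mem_append.1 hx with hx | hx
      · exact (h6 x hx).1
      · exact h3 x hx
  · intro w hw
    simp
  · rintro ⟨h, u⟩ hx
    rw [Finset.mem_sigma, mem_words, mem_words] at hx
    obtain ⟨-, -, h5, -⟩ := hx
    dsimp only at *
    subst h5
    simp
  · intro w hw
    simp

theorem sum_words_one (S : Finset ℕ) (g : List ℕ → ℕ[X]) :
    ∑ w ∈ words S 1, g w = ∑ b ∈ S, g [b] := by
  symm
  refine Finset.sum_bij (fun b _ => [b]) ?_ ?_ ?_ ?_
  · intro b hb
    simpa [mem_words] using hb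
  · intro a _ b _ h
    simpa using h
  · intro w hw
    rw [mem_words] at hw
    obtain ⟨-, h2, h3⟩ := hw
    obtain ⟨b, rfl⟩ := List.length_eq_one_iff.1 h2
    exact ⟨b, by simpa using h3, rfl⟩
  · intros; rfl

/-- Words are grouped by their set of letters. -/
theorem sum_words_powersetCard (S : Finset ℕ) (m : ℕ) (g : List ℕ → ℕ[X]) :
    ∑ w ∈ words S m, g w = ∑ T ∈ powersetCard m S, ∑ w ∈ words T m, g w := by
  rw [Finset.sum_sigma']
  refine Finset.sum_bij' (fun w _ => (⟨w.toFinset, w⟩ : Σ _ : Finset ℕ, List ℕ))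
    (fun x _ => x.2) ?_ ?_ ?_ ?_ ?_
  · intro w hw
    rw [mem_words] at hw
    obtain ⟨hn, hl, hS⟩ := hw
    rw [Finset.mem_sigma, mem_words, mem_powersetCard]
    refine ⟨⟨?_, ?_⟩, hn, hl, by simp⟩
    · intro x hx
      exact hS x (by simpa using hx)
    · rw [List.toFinset_card_of_nodup hn, hl]
  · rintro ⟨T, w⟩ hx
    rw [Finset.mem_sigma, mem_words, mem_powersetCard] at hx
    obtain ⟨⟨h1, h2⟩, h3, h4, h5⟩ := hx
    rw [mem_words]
    exact ⟨h3, h4, fun x hx => h1 (h5 x hx)⟩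
  · intros; rfl
  · rintro ⟨T, w⟩ hx
    rw [Finset.mem_sigma, mem_powersetCard] at hx
    obtain ⟨⟨h1, h2⟩, h3⟩ := hx
    dsimp only at *
    subst h2
    rw [toFinset_of_mem_words h3]
  · intros; rfl

theorem words_zero (S : Finset ℕ) : words S 0 = {[]} := by
  ext l
  rw [mem_words, Finset.mem_singleton]
  constructor
  · rintro ⟨-, h, -⟩
    exact List.length_eq_zero_iff.1 h
  · rintro rfl
    simp

/-- A strictly increasing word is determined by its set of letters. -/
theorem eq_of_incr {l l' : List ℕ} (h : l.Pairwise (· < ·)) (h' : l'.Pairwise (· < ·))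
    (hm : ∀ x, x ∈ l ↔ x ∈ l') : l = l' := by
  have hp : l.Perm l' := (List.perm_ext_iff_of_nodup (h.imp (fun h => h.ne))
    (h'.imp (fun h => h.ne))).2 hm
  exact hp.eq_of_pairwise (fun a b _ _ h1 h2 => absurd h1 (not_lt.2 h2.le)) h h'

theorem exists_incr (B : Finset ℕ) :
    ∃ l : List ℕ, l.Pairwise (· < ·) ∧ (∀ x, x ∈ l ↔ x ∈ B) ∧ l.length = #B :=
  ⟨B.sort (· ≤ ·), (Finset.sortedLT_sort B).pairwise, fun x => Finset.mem_sort _,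
    Finset.length_sort _⟩

theorem nodup_of_incr {l : List ℕ} (h : l.Pairwise (· < ·)) : l.Nodup :=
  h.imp (fun h => h.ne)

/-! ### Two summations over the letters of a set -/

/-- The polynomial `X + X² + ⋯ + X^(s-1)`, which is the generating polynomial of the hooks on a
set of `s` letters with respect to inversions. It vanishes for `s = 0` and `s = 1`. -/
noncomputable def hookPoly (s : ℕ) : ℕ[X] := ∑ j ∈ range (s - 1), X ^ (j + 1)

theorem hookPoly_succ {s : ℕ} (h : 1 ≤ s) : hookPoly (s + 1) = hookPoly s + X ^ s := by
  obtain ⟨s, rfl⟩ := Nat.exists_eq_add_of_le' h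
  simp [hookPoly, Finset.sum_range_succ]

theorem hookPoly_succ' {s : ℕ} (h : 1 ≤ s) : hookPoly (s + 1) = X + X * hookPoly s := by
  obtain ⟨s, rfl⟩ := Nat.exists_eq_add_of_le' h
  simp only [hookPoly, Nat.add_sub_cancel, Finset.sum_range_succ', Finset.mul_sum, zero_add, pow_one]
  rw [add_comm]
  congr 1
  apply Finset.sum_congr rfl
  intros
  ring

/-- Let `c = #{a ∈ B : x < a}`. For the letter `b` of `B` with exactly `j` larger letters in `B`,
the exponent is `j + 1` if `j < c` and `j` if `c ≤ j`. The exponents are therefore `1, …, c` and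
`c, …, #B - 1`, that is, `1, …, #B - 1` together with `c`. -/
theorem sum_prepend (B : Finset ℕ) (x : ℕ) (hx : x ∉ B) (hB : B.Nonempty) :
    ∑ b ∈ B, (X : ℕ[X]) ^ (#{a ∈ B | b < a} + if x < b then 1 else 0) =
      hookPoly #B + X ^ #{a ∈ B | x < a} := by
  induction B using Finset.induction_on_max with
  | empty => simp at hB
  | insert M B hM ih =>
    have hMB : M ∉ B := fun h => lt_irrefl _ (hM M h)
    rw [Finset.mem_insert, not_or] at hx
    rw [Finset.sum_insert hMB, Finset.card_insert_of_notMem hMB]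
    have h1 : #{a ∈ insert M B | M < a} = 0 := by
      rw [Finset.card_eq_zero, Finset.filter_eq_empty_iff]
      intro a ha
      rcases Finset.mem_insert.1 ha with rfl | ha
      · exact lt_irrefl _
      · exact (hM a ha).not_gt
    have h2 : ∀ b ∈ B, #{a ∈ insert M B | b < a} = #{a ∈ B | b < a} + 1 := by
      intro b hb
      rw [Finset.filter_insert, if_pos (hM b hb), Finset.card_insert_of_notMem]
      simp [hMB]
    have h3 : ∑ b ∈ B, (X : ℕ[X]) ^ (#{a ∈ insert M B | b < a} + if x < b then 1 else 0) =
        X * ∑ b ∈ B, (X : ℕ[X]) ^ (#{a ∈ B | b < a} + if x < b then 1 else 0) := by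
      rw [Finset.mul_sum]
      apply Finset.sum_congr rfl
      intro b hb
      rw [h2 b hb]
      ring
    rw [h1, h3]
    rcases B.eq_empty_or_nonempty with rfl | hB'
    · by_cases hxM : x < M <;> simp [hookPoly, hxM, Finset.filter_singleton]
    · rw [ih hx.2 hB', hookPoly_succ' (Finset.card_pos.2 hB')]
      by_cases hxM : x < M
      · rw [Finset.filter_insert, if_pos hxM, if_pos hxM, Finset.card_insert_of_notMem (by simp [hMB])]
        ring
      · have h4 : ∀ b ∈ B, ¬ x < b := fun b hb => by have := hM b hb; omega
        rw [Finset.filter_insert, if_neg hxM, if_neg hxM, Finset.filter_eq_empty_iff.2 (fun b hb => h4 b hb)]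
        simp
        ring

/-- A hook on the set of letters `T` is determined by its first letter `a`, which is any letter
of `T` but the smallest; its inversions are the pairs formed by `a` and a smaller letter. -/
theorem sum_hook_first (T : Finset ℕ) :
    ∑ a ∈ T with ∃ x ∈ T, x < a, (X : ℕ[X]) ^ #{x ∈ T | x < a} = hookPoly #T := by
  induction T using Finset.induction_on_max with
  | empty => simp [hookPoly]
  | insert M T hM ih =>
    have hMT : M ∉ T := fun h => lt_irrefl _ (hM M h)
    have h2 : ∀ a ∈ T, {x ∈ insert M T | x < a} = {x ∈ T | x < a} := by
      intro a ha
      rw [Finset.filter_insert, if_neg (hM a ha).not_gt]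
    have h1 : {x ∈ insert M T | x < M} = T := by
      rw [Finset.filter_insert, if_neg (lt_irrefl _), Finset.filter_true_of_mem hM]
    have h3 : {a ∈ T | ∃ x ∈ insert M T, x < a} = {a ∈ T | ∃ x ∈ T, x < a} := by
      apply Finset.filter_congr
      intro a ha
      have := hM a ha
      constructor
      · rintro ⟨x, hx, hxa⟩
        rcases Finset.mem_insert.1 hx with rfl | hx
        · omega
        · exact ⟨x, hx, hxa⟩
      · rintro ⟨x, hx, hxa⟩
        exact ⟨x, Finset.mem_insert_of_mem hx, hxa⟩
    have h4 : ∑ a ∈ T with ∃ x ∈ T, x < a, (X : ℕ[X]) ^ #{x ∈ insert M T | x < a} =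
        hookPoly #T := by
      rw [← ih]
      apply Finset.sum_congr rfl
      intro a ha
      rw [h2 a (Finset.mem_filter.1 ha).1]
    rw [Finset.filter_insert, h3, Finset.card_insert_of_notMem hMT]
    rcases T.eq_empty_or_nonempty with rfl | hT
    · simp [hookPoly]
    · obtain ⟨y, hy⟩ := hT
      rw [if_pos ⟨y, Finset.mem_insert_of_mem hy, hM y hy⟩,
        Finset.sum_insert (by simp [hMT]), h4, h1, hookPoly_succ (Finset.card_pos.2 ⟨y, hy⟩)]
      ring

/-! ### Hook factorizations -/

/-- The hook factorization `(γ, [α₁, …, α_k])` of a word, read from right to left: a letter put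
in front of a non-empty increasing word `γ` either extends `γ` or closes a hook. -/
def hookFact : List ℕ → List ℕ × List (List ℕ)
  | [] => ([], [])
  | a :: w =>
    match hookFact w with
    | ([], hs) => ([a], hs)
    | (b :: g, hs) => if a < b then (a :: b :: g, hs) else ([], (a :: b :: g) :: hs)

theorem incr_iff (l : List ℕ) : Incr l ↔ l.Pairwise (· < ·) := List.isChain_iff_pairwise

theorem isHookFact_hookFact (w : List ℕ) (hw : w.Nodup) :
    IsHookFact w (hookFact w).1 (hookFact w).2 := by
  induction w with
  | nil => simp [hookFact, IsHookFact, incr_iff]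
  | cons a w ih =>
    have ih := ih hw.of_cons
    rw [hookFact]
    rcases hf : hookFact w with ⟨g, hs⟩
    rw [hf] at ih
    obtain ⟨h1, h2, h3⟩ := ih
    rcases g with _ | ⟨b, g⟩
    · refine ⟨by simp [incr_iff], h2, by simpa using h3⟩
    · dsimp only at *
      have hab : a ≠ b := by
        rintro rfl
        rw [h3] at hw
        simp at hw
      split_ifs with h
      · refine ⟨?_, h2, by simp [h3]⟩
        exact List.isChain_cons_cons.2 ⟨h, h1⟩
      · refine ⟨by simp [incr_iff], ?_, by simp [h3]⟩
        intro x hx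
        rcases List.mem_cons.1 hx with rfl | hx
        · exact ⟨by omega, h1⟩
        · exact h2 x hx

/-- The hook factorization is unique. -/
theorem hookFact_eq (w γ : List ℕ) (hs : List (List ℕ)) (h : IsHookFact w γ hs) :
    hookFact w = (γ, hs) := by
  induction w generalizing γ hs with
  | nil =>
    obtain ⟨h1, h2, h3⟩ := h
    rw [eq_comm, List.append_eq_nil_iff] at h3
    obtain ⟨rfl, h3⟩ := h3
    rcases hs with _ | ⟨x, hs⟩
    · rfl
    · have := h2 x (by simp)
      rw [List.flatten_cons, List.append_eq_nil_iff] at h3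
      rw [h3.1] at this
      exact this.elim
  | cons a w ih =>
    obtain ⟨h1, h2, h3⟩ := h
    rw [hookFact]
    rcases γ with _ | ⟨c, γ⟩
    · rcases hs with _ | ⟨x, hs⟩
      · simp at h3
      · have hx := h2 x (by simp)
        rcases x with _ | ⟨c, _ | ⟨b, g⟩⟩
        · exact hx.elim
        · exact hx.elim
        · simp only [List.nil_append, List.flatten_cons, List.cons_append, List.cons.injEq] at h3
          obtain ⟨rfl, h3⟩ := h3
          rw [ih (b :: g) hs ⟨hx.2, fun y hy => h2 y (by simp [hy]), by simp [h3]⟩]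
          simp [hx.1.not_gt]
    · simp only [List.cons_append, List.cons.injEq] at h3
      obtain ⟨rfl, h3⟩ := h3
      rw [ih γ hs ⟨?_, h2, h3⟩]
      · rcases γ with _ | ⟨b, g⟩
        · rfl
        · have : a < b := (List.isChain_cons_cons.1 h1).1
          simp [this]
      · exact List.IsChain.tail h1

/-- The statistic `lec` of a word. -/
def lec (w : List ℕ) : ℕ := lecVal (hookFact w).2

/-- The length of the rightmost hook of a word. -/
def lastHook (w : List ℕ) : ℕ := ((hookFact w).2.getLastD (hookFact w).1).length

theorem hookFact_append (u h : List ℕ) (hu : u.Nodup) (hh : IsHook h) :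
    hookFact (u ++ h) = ((hookFact u).1, (hookFact u).2 ++ [h]) := by
  obtain ⟨h1, h2, h3⟩ := isHookFact_hookFact u hu
  apply hookFact_eq
  refine ⟨h1, ?_, ?_⟩
  · intro x hx
    rcases List.mem_append.1 hx with hx | hx
    · exact h2 x hx
    · rw [List.mem_singleton.1 hx]
      exact hh
  · rw [List.flatten_append, ← List.append_assoc, ← h3]
    simp

theorem hookFact_incr (h : List ℕ) (hh : Incr h) : hookFact h = (h, []) :=
  hookFact_eq _ _ _ ⟨hh, by simp, by simp⟩

theorem lastHook_append (u h : List ℕ) (hn : (u ++ h).Nodup)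
    (hl : lastHook (u ++ h) = h.length) : IsHook h ∨ (u = [] ∧ Incr h) := by
  obtain ⟨h1, h2, h3⟩ := isHookFact_hookFact (u ++ h) hn
  unfold lastHook at hl
  rcases List.eq_nil_or_concat (hookFact (u ++ h)).2 with hs | ⟨hs, x, hx⟩
  · right
    rw [hs] at h3 hl
    simp only [List.flatten_nil, List.append_nil] at h3
    simp only [List.getLastD_nil, ← h3, List.length_append] at hl
    have hu : u = [] := List.length_eq_zero_iff.1 (by omega)
    subst hu
    rw [← h3] at h1
    exact ⟨rfl, h1⟩
  · left
    rw [List.concat_eq_append] at hx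
    rw [hx] at h2 h3 hl
    simp only [List.getLastD_concat] at hl
    rw [List.flatten_append, ← List.append_assoc] at h3
    simp only [List.flatten_cons, List.flatten_nil, List.append_nil] at h3
    rw [(List.append_inj' h3 hl.symm).2]
    exact h2 x (by simp)

theorem lastHook_le (w : List ℕ) (hw : w.Nodup) : lastHook w ≤ w.length := by
  obtain ⟨h1, h2, h3⟩ := isHookFact_hookFact w hw
  unfold lastHook
  rcases List.eq_nil_or_concat (hookFact w).2 with hs | ⟨hs, x, hx⟩
  · rw [hs] at h3 ⊢
    have := congrArg List.length h3
    simp at this ⊢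
    omega
  · rw [List.concat_eq_append] at hx
    rw [hx] at h3 ⊢
    have := congrArg List.length h3
    simp at this ⊢
    omega

theorem inv_incr (l : List ℕ) (h : l.Pairwise (· < ·)) : inv l = 0 := by
  induction l with
  | nil => rfl
  | cons a l ih =>
    rw [List.pairwise_cons] at h
    rw [inv, ih h.2, List.countP_eq_zero.2]
    intro x hx
    simpa using (h.1 x hx).le

open Classical in
theorem sum_isHook (T : Finset ℕ) :
    ∑ h ∈ words T #T with IsHook h, (X : ℕ[X]) ^ inv h = hookPoly #T := by
  rw [← sum_hook_first]
  refine Finset.sum_bij (fun h _ => h.headI) ?_ ?_ ?_ ?_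
  · intro h hh
    rw [Finset.mem_filter, mem_words] at hh
    rcases h with _ | ⟨a, _ | ⟨b, g⟩⟩
    · exact hh.2.elim
    · exact hh.2.elim
    · rw [Finset.mem_filter]
      exact ⟨hh.1.2.2 _ (by simp), b, hh.1.2.2 b (by simp), hh.2.1⟩
  · intro h hh h' hh' heq
    rw [Finset.mem_filter] at hh hh'
    have e1 := toFinset_of_mem_words hh.1
    have e2 := toFinset_of_mem_words hh'.1
    have n1 := (mem_words.1 hh.1).1
    have n2 := (mem_words.1 hh'.1).1
    rcases h with _ | ⟨a, _ | ⟨b, g⟩⟩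
    · exact hh.2.elim
    · exact hh.2.elim
    rcases h' with _ | ⟨a', _ | ⟨b', g'⟩⟩
    · exact hh'.2.elim
    · exact hh'.2.elim
    simp only [List.headI_cons] at heq
    subst heq
    congr 1
    apply eq_of_incr
    · exact List.isChain_iff_pairwise.1 hh.2.2
    · exact List.isChain_iff_pairwise.1 hh'.2.2
    · intro x
      have e : x ∈ (a :: b :: g).toFinset ↔ x ∈ (a :: b' :: g').toFinset := by rw [e1, e2]
      rw [List.mem_toFinset, List.mem_toFinset] at e
      have m1 := (List.nodup_cons.1 n1).1
      have m2 := (List.nodup_cons.1 n2).1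
      constructor
      · intro hx
        rcases List.mem_cons.1 (e.1 (List.mem_cons_of_mem _ hx)) with rfl | hx'
        · exact absurd hx m1
        · exact hx'
      · intro hx
        rcases List.mem_cons.1 (e.2 (List.mem_cons_of_mem _ hx)) with rfl | hx'
        · exact absurd hx m2
        · exact hx'
  · intro a ha
    rw [Finset.mem_filter] at ha
    obtain ⟨haT, x, hxT, hxa⟩ := ha
    obtain ⟨l, hl1, hl2, hl3⟩ := exists_incr (T.erase a)
    rcases l with _ | ⟨b, g⟩
    · have := (hl2 x).2 (Finset.mem_erase.2 ⟨by omega, hxT⟩)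
      simp at this
    · refine ⟨a :: b :: g, ?_, rfl⟩
      rw [Finset.mem_filter, mem_words]
      refine ⟨⟨?_, ?_, ?_⟩, ?_, ?_⟩
      · rw [List.nodup_cons]
        refine ⟨?_, nodup_of_incr hl1⟩
        rw [hl2]
        simp
      · rw [List.length_cons, hl3, Finset.card_erase_add_one haT]
      · intro y hy
        rcases List.mem_cons.1 hy with rfl | hy
        · exact haT
        · exact Finset.mem_of_mem_erase ((hl2 y).1 hy)
      · have := (hl2 x).2 (Finset.mem_erase.2 ⟨by omega, hxT⟩)
        rcases List.mem_cons.1 this with rfl | hx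
        · exact hxa
        · exact ((List.pairwise_cons.1 hl1).1 x hx).trans hxa
      · exact List.isChain_iff_pairwise.2 hl1
  · intro h hh
    rw [Finset.mem_filter] at hh
    have e1 := toFinset_of_mem_words hh.1
    have n1 := (mem_words.1 hh.1).1
    rcases h with _ | ⟨a, _ | ⟨b, g⟩⟩
    · exact hh.2.elim
    · exact hh.2.elim
    rw [inv, inv_incr _ (List.isChain_iff_pairwise.1 hh.2.2), add_zero]
    congr 1
    rw [List.countP_eq_length_filter, ← List.toFinset_card_of_nodup
      ((List.nodup_cons.1 n1).2.filter _), List.toFinset_filter, ← e1, List.toFinset_cons (a := a)]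
    rw [Finset.filter_insert]
    simp

/-- The generating polynomial of `lec` on the words using all the letters of `S`. -/
noncomputable def lecPoly (S : Finset ℕ) : ℕ[X] := ∑ w ∈ words S #S, X ^ lec w

open Classical in
theorem sum_incr (S : Finset ℕ) : ∑ h ∈ words S #S, (if Incr h then (1 : ℕ[X]) else 0) = 1 := by
  obtain ⟨l, h1, h2, h3⟩ := exists_incr S
  rw [Finset.sum_eq_single l]
  · rw [if_pos ((incr_iff l).2 h1)]
  · intro h hh hne
    rw [if_neg]
    intro hi
    apply hne
    apply eq_of_incr ((incr_iff h).1 hi) h1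
    intro x
    rw [h2, ← toFinset_of_mem_words hh, List.mem_toFinset]
  · intro h
    exact absurd (mem_words.2 ⟨nodup_of_incr h1, h3, fun x hx => (h2 x).1 hx⟩) h

open Classical in
/-- Removing the rightmost hook, whose set of letters is `T`, leaves an arbitrary word on
the remaining letters; the last summand accounts for the increasing word. -/
theorem sum_lastHook_eq (S : Finset ℕ) (L : ℕ) (hL : L ≤ #S) :
    ∑ w ∈ words S #S with lastHook w = L, (X : ℕ[X]) ^ lec w =
      ∑ T ∈ powersetCard L S, hookPoly L * lecPoly (S \ T) + if L = #S then 1 else 0 := by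
  rw [Finset.sum_filter]
  have e : words S #S = words S ((#S - L) + L) := by rw [Nat.sub_add_cancel hL]
  rw [e, sum_words_append]
  have key : ∀ h ∈ words S L, ∀ u ∈ words (S \ h.toFinset) (#S - L),
      (if lastHook (u ++ h) = L then (X : ℕ[X]) ^ lec (u ++ h) else 0) =
        (if IsHook h then X ^ inv h else 0) * X ^ lec u +
          (if Incr h then 1 else 0) * (if u = [] then 1 else 0) := by
    intro h hh u hu
    rw [mem_words] at hh hu
    have hn : (u ++ h).Nodup := by
      rw [List.nodup_append]
      refine ⟨hu.1, hh.1, ?_⟩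
      rintro a ha b hb rfl
      have := hu.2.2 a ha
      simp [hb] at this
    by_cases h1 : IsHook h
    · have h2 : ¬ Incr h := by
        intro h2
        rw [incr_iff] at h2
        rcases h with _ | ⟨a, _ | ⟨b, g⟩⟩
        · exact h1
        · exact h1
        · have := (List.pairwise_cons.1 h2).1 b (by simp)
          have := h1.1
          omega
      have h3 := hookFact_append u h hu.1 h1
      rw [if_pos, if_pos h1, if_neg h2, ← pow_add]
      · simp [lec, h3, lecVal, add_comm]
      · simp [lastHook, h3, hh.2.1]
    · rw [if_neg h1]
      by_cases h2 : u = [] ∧ Incr h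
      · obtain ⟨rfl, h2⟩ := h2
        simp [lastHook, lec, hookFact_incr h h2, hh.2.1, h2, lecVal]
      · rw [if_neg]
        · rw [not_and'] at h2
          by_cases h3 : Incr h
          · simp [h2 h3]
          · simp [h3]
        · intro hl
          rw [← hh.2.1] at hl
          exact (lastHook_append u h hn hl).elim h1 h2
  rw [Finset.sum_congr rfl fun h hh => Finset.sum_congr rfl (key h hh)]
  simp only [Finset.sum_add_distrib, ← Finset.mul_sum]
  congr 1
  · rw [sum_words_powersetCard, Finset.mul_sum]
    apply Finset.sum_congr rfl
    intro T hT
    rw [mem_powersetCard] at hT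
    obtain ⟨hTS, rfl⟩ := hT
    rw [← sum_isHook, Finset.sum_filter, Finset.sum_mul]
    apply Finset.sum_congr rfl
    intro h hh
    rw [toFinset_of_mem_words hh, lecPoly, Finset.card_sdiff_of_subset hTS]
  · by_cases h : L = #S
    · subst h
      rw [if_pos rfl, Nat.sub_self]
      refine Eq.trans ?_ (sum_incr S)
      apply Finset.sum_congr rfl
      intro h hh
      simp [words_zero]
    · rw [if_neg h]
      apply Finset.sum_eq_zero
      intro x hx
      rw [Finset.sum_eq_zero, mul_zero]
      intro u hu
      rw [if_neg]
      rintro rfl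
      rw [mem_words] at hu
      simp at hu
      omega

open Classical in
theorem sum_le_lastHook (S : Finset ℕ) (L : ℕ) (hL : L ≤ #S) :
    ∑ w ∈ words S #S with L ≤ lastHook w, (X : ℕ[X]) ^ lec w =
      1 + ∑ l ∈ Icc L #S, ∑ T ∈ powersetCard l S, hookPoly l * lecPoly (S \ T) := by
  rw [← Finset.sum_fiberwise_of_maps_to (s := {w ∈ words S #S | L ≤ lastHook w}) (t := Icc L #S)
    (g := lastHook)]
  · have : ∀ l ∈ Icc L #S,
        ∑ w ∈ {w ∈ words S #S | L ≤ lastHook w} with lastHook w = l, (X : ℕ[X]) ^ lec w =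
        ∑ T ∈ powersetCard l S, hookPoly l * lecPoly (S \ T) + if l = #S then 1 else 0 := by
      intro l hl
      rw [Finset.mem_Icc] at hl
      rw [← sum_lastHook_eq S l hl.2, Finset.filter_filter]
      congr 1
      apply Finset.filter_congr
      intro w _
      constructor
      · exact fun h => h.2
      · rintro rfl
        exact ⟨hl.1, rfl⟩
    rw [Finset.sum_congr rfl this, Finset.sum_add_distrib, Finset.sum_ite_eq', if_pos, add_comm]
    rw [Finset.mem_Icc]
    exact ⟨hL, le_rfl⟩
  · intro w hw
    rw [Finset.mem_filter] at hw
    have h := mem_words.1 hw.1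
    rw [Finset.mem_Icc, ← h.2.1]
    exact ⟨hw.2, lastHook_le w h.1⟩

/-! ### Special reverse waves -/

theorem le_decRun (v : List ℕ) (b : ℕ) (τ : List ℕ) (hi lo : ℕ) :
    v.length + 1 ≤ (decRun hi lo (v ++ b :: τ)).length ↔
      (hi :: (v ++ [b])).Pairwise (· > ·) ∧ lo < b := by
  induction v generalizing hi with
  | nil =>
    simp only [List.nil_append, decRun]
    split_ifs with h
    · simp [h.1, h.2]
    · simpa using h
  | cons a v ih =>
    simp only [List.cons_append, decRun]
    split_ifs with h
    · rw [List.length_cons, List.length_cons, Nat.add_le_add_iff_right, ih]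
      refine and_congr_left fun _ => ?_
      simp only [← List.isChain_iff_pairwise]
      rw [List.isChain_cons_cons]
      simp [h.1]
    · simp only [List.length_cons, List.length_nil, Nat.le_zero, Nat.add_eq_zero_iff,
        one_ne_zero, and_false, false_iff, not_and]
      intro hp
      rw [List.pairwise_cons] at hp
      have h1 := hp.1 a (by simp)
      have h2 := (List.pairwise_cons.1 hp.2).1 b (by simp)
      omega

/-- The run started with lower bound `lo` reaches the letter `b` exactly when the letters before `b`
split into an increasing part, still increasing when `b` is appended, and a decreasing part, still
decreasing when `b` is appended. -/
theorem le_srwAux (v : List ℕ) (b : ℕ) (τ : List ℕ) (lo : ℕ) (hlo : lo < (v ++ [b]).headI)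
    (hn : (v ++ [b]).Nodup) :
    v.length + 1 ≤ (srwAux lo (v ++ b :: τ)).length ↔
      ∃ C D, v = C ++ D ∧ (lo :: (C ++ [b])).Pairwise (· < ·) ∧ (D ++ [b]).Pairwise (· > ·) := by
  induction v generalizing lo with
  | nil =>
    have h1 : ([] : List ℕ).length + 1 ≤ (srwAux lo ([] ++ b :: τ)).length := by
      rcases τ with _ | ⟨c, τ⟩
      · simp [srwAux]
      · simp only [List.nil_append, srwAux]
        split_ifs <;> simp
    refine iff_of_true h1 ⟨[], [], rfl, ?_, ?_⟩
    · simpa using hlo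
    · simp
  | cons a v ih =>
    have hlo' : lo < a := by simpa using hlo
    have hn' : (v ++ [b]).Nodup := (List.nodup_cons.1 hn).2
    obtain ⟨c, r, hr⟩ : ∃ c r, v ++ b :: τ = c :: r := by
      rcases v with _ | ⟨c, v⟩
      · exact ⟨b, τ, rfl⟩
      · exact ⟨c, v ++ b :: τ, rfl⟩
    obtain ⟨r', hr'⟩ : ∃ r', v ++ [b] = c :: r' := by
      rcases v with _ | ⟨d, v⟩
      · simp at hr
        exact ⟨[], by simp [hr.1]⟩
      · simp at hr
        exact ⟨v ++ [b], by simp [hr.1]⟩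
    have hac : a ≠ c := by
      rintro rfl
      rw [List.cons_append, hr'] at hn
      simp at hn
    rw [List.cons_append, hr, srwAux]
    split_ifs with h
    · rw [List.length_cons, List.length_cons, Nat.add_le_add_iff_right, ← hr,
        ih a (by rw [hr']; exact h) hn']
      constructor
      · rintro ⟨C, D, rfl, h1, h2⟩
        refine ⟨a :: C, D, rfl, ?_, h2⟩
        rw [← List.isChain_iff_pairwise] at h1 ⊢
        rw [List.cons_append, List.isChain_cons_cons]
        exact ⟨hlo', h1⟩
      · rintro ⟨C, D, h0, h1, h2⟩
        rcases C with _ | ⟨a', C⟩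
        · exfalso
          rw [List.nil_append] at h0
          rw [← h0, List.cons_append, hr'] at h2
          have := (List.pairwise_cons.1 h2).1 c (by simp)
          omega
        · rw [List.cons_append, List.cons.injEq] at h0
          obtain ⟨rfl, h0⟩ := h0
          exact ⟨C, D, h0, (List.pairwise_cons.1 h1).2, h2⟩
    · rw [List.length_cons, List.length_cons, Nat.add_le_add_iff_right, ← hr, le_decRun]
      constructor
      · rintro ⟨h1, h2⟩
        exact ⟨[], a :: v, rfl, by simpa using h2, h1⟩
      · rintro ⟨C, D, h0, h1, h2⟩
        rcases C with _ | ⟨a', C⟩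
        · rw [List.nil_append] at h0
          subst h0
          exact ⟨h2, by simpa using h1⟩
        · exfalso
          rw [List.cons_append, List.cons.injEq] at h0
          obtain ⟨rfl, rfl⟩ := h0
          have h1 := (List.pairwise_cons.1 h1).2
          rw [List.cons_append, List.pairwise_cons] at h1
          rcases C with _ | ⟨c', C⟩
          · rw [List.nil_append] at hr'
            have h3 := h1.1 b (by simp)
            rcases D with _ | ⟨d, D⟩
            · simp at hr'
              omega
            · simp at hr'
              have := (List.pairwise_cons.1 h2).1 b (by simp)
              omega
          · simp at hr'
            have := h1.1 c' (by simp)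
            omega

theorem des_decr (D : List ℕ) (b : ℕ) (τ : List ℕ) (h : (D ++ [b]).Pairwise (· > ·)) :
    des (D ++ b :: τ) = D.length + des (b :: τ) := by
  induction D with
  | nil => simp
  | cons a D ih =>
    have h' := List.pairwise_cons.1 h
    rw [List.length_cons, add_right_comm, ← ih h'.2]
    rcases D with _ | ⟨c, D⟩
    · have := h'.1 b (by simp)
      simp [des, this, add_comm]
    · have := h'.1 c (by simp)
      simp [des, this, add_comm]

theorem des_incr_append (C l : List ℕ) (h : C.Pairwise (· < ·))
    (hl : ∀ x ∈ C, x < l.headI) : des (C ++ l) = des l := by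
  induction C with
  | nil => rfl
  | cons a C ih =>
    rw [← ih (List.pairwise_cons.1 h).2 (fun x hx => hl x (by simp [hx]))]
    rcases C with _ | ⟨c, C⟩
    · rcases l with _ | ⟨x, l⟩
      · rfl
      · have := hl a (by simp)
        simp at this
        simp [des, this.le]
    · have := (List.pairwise_cons.1 h).1 c (by simp)
      simp [des, this.le]

open Classical in
/-- Given the suffix `b τ`, exactly one arrangement of the remaining letters `B` makes the special
reverse wave reach the letter `b`: the letters smaller than `b` in increasing order, then the
larger ones in decreasing order. -/
theorem sum_fill (B : Finset ℕ) (b : ℕ) (τ : List ℕ) (hb : b ∉ B) (hb0 : 0 < b)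
    (hB : ∀ x ∈ B, 0 < x) :
    ∑ v ∈ words B #B, (if #B + 1 ≤ (srw (v ++ b :: τ)).length then
        (X : ℕ[X]) ^ des (v ++ b :: τ) else 0) =
      X ^ (#{a ∈ B | b < a} + des (b :: τ)) := by
  obtain ⟨C, hC1, hC2, hC3⟩ := exists_incr {a ∈ B | a < b}
  obtain ⟨D, hD1, hD2, hD3⟩ := exists_incr {a ∈ B | b < a}
  simp only [Finset.mem_filter] at hC2 hD2
  have hCb : (0 :: (C ++ [b])).Pairwise (· < ·) := by
    rw [List.pairwise_cons, List.pairwise_append]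
    refine ⟨?_, hC1, by simp, ?_⟩
    · intro x hx
      rcases List.mem_append.1 hx with hx | hx
      · exact hB x ((hC2 x).1 hx).1
      · rw [List.mem_singleton.1 hx]
        exact hb0
    · intro x hx y hy
      rw [List.mem_singleton.1 hy]
      exact ((hC2 x).1 hx).2
  have hDb : (D.reverse ++ [b]).Pairwise (· > ·) := by
    rw [List.pairwise_append, List.pairwise_reverse]
    refine ⟨hD1, by simp, ?_⟩
    intro x hx y hy
    rw [List.mem_singleton.1 hy]
    exact ((hD2 x).1 (List.mem_reverse.1 hx)).2
  have hmem : C ++ D.reverse ∈ words B #B := by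
    rw [mem_words]
    refine ⟨?_, ?_, ?_⟩
    · rw [List.nodup_append, List.nodup_reverse]
      refine ⟨nodup_of_incr hC1, nodup_of_incr hD1, ?_⟩
      rintro x hx y hy rfl
      have h1 := ((hC2 x).1 hx).2
      have h2 := ((hD2 x).1 (List.mem_reverse.1 hy)).2
      omega
    · rw [List.length_append, List.length_reverse, hC3, hD3,
        ← Finset.card_filter_add_card_filter_not (s := B) (fun a => a < b)]
      congr 2
      apply Finset.filter_congr
      intro x hx
      have : x ≠ b := by
        rintro rfl
        exact hb hx
      omega
    · intro x hx
      rcases List.mem_append.1 hx with hx | hx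
      · exact ((hC2 x).1 hx).1
      · exact ((hD2 x).1 (List.mem_reverse.1 hx)).1
  have hiff : ∀ v ∈ words B #B, (#B + 1 ≤ (srw (v ++ b :: τ)).length ↔
      ∃ C D, v = C ++ D ∧ (0 :: (C ++ [b])).Pairwise (· < ·) ∧
        (D ++ [b]).Pairwise (· > ·)) := by
    intro v hv
    rw [mem_words] at hv
    rw [← hv.2.1, srw]
    apply le_srwAux
    · rcases v with _ | ⟨x, v⟩
      · exact hb0
      · exact hB x (hv.2.2 x (by simp))
    · rw [List.nodup_append]
      refine ⟨hv.1, by simp, ?_⟩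
      rintro x hx y hy rfl
      rw [List.mem_singleton.1 hy] at hx
      exact hb (hv.2.2 b hx)
  rw [Finset.sum_eq_single (C ++ D.reverse)]
  · rw [if_pos ((hiff _ hmem).2 ⟨C, D.reverse, rfl, hCb, hDb⟩), List.append_assoc,
      des_incr_append C _ hC1, des_decr _ _ _ hDb, List.length_reverse, hD3]
    intro x hx
    have h1 := ((hC2 x).1 hx).2
    rcases hD : D.reverse with _ | ⟨d, D'⟩
    · exact h1
    · have h2 := ((hD2 d).1 (List.mem_reverse.1 (by rw [hD]; simp))).2
      exact h1.trans h2
  · intro v hv hne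
    rw [if_neg]
    rw [hiff v hv]
    rintro ⟨C', D', rfl, h1, h2⟩
    apply hne
    have h1 := (List.pairwise_cons.1 h1).2
    rw [List.pairwise_append] at h1 h2
    have hm : ∀ x, x ∈ C' ∨ x ∈ D' ↔ x ∈ B := by
      intro x
      rw [← toFinset_of_mem_words hv]
      simp
    have hC' : ∀ x ∈ C', x < b := fun x hx => h1.2.2 x hx b (by simp)
    have hD' : ∀ x ∈ D', b < x := fun x hx => h2.2.2 x hx b (by simp)
    congr 1
    · apply eq_of_incr h1.1 hC1
      intro x
      rw [hC2, ← hm]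
      constructor
      · exact fun hx => ⟨Or.inl hx, hC' x hx⟩
      · rintro ⟨hx | hx, hxb⟩
        · exact hx
        · have := hD' x hx
          omega
    · rw [← List.reverse_eq_iff]
      apply eq_of_incr _ hD1
      · intro x
        rw [List.mem_reverse, hD2, ← hm]
        constructor
        · exact fun hx => ⟨Or.inr hx, hD' x hx⟩
        · rintro ⟨hx | hx, hxb⟩
          · have := hC' x hx
            omega
          · exact hx
      · rw [List.pairwise_reverse]
        exact h2.1
  · exact fun h => absurd hmem h

/-- The weight of a word `ρ` over `S`: its number of descents plus the number of letters of `S`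
outside `ρ` that exceed the first letter of `ρ`. The empty word has weight `0`. -/
def weight (S : Finset ℕ) : List ℕ → ℕ
  | [] => 0
  | b :: τ => #{a ∈ S \ (b :: τ).toFinset | b < a} + des (b :: τ)

/-- The generating polynomial of `des` on the words using all the letters of `S`. -/
noncomputable def desPoly (S : Finset ℕ) : ℕ[X] := ∑ w ∈ words S #S, X ^ des w

open Classical in
theorem sum_le_srw (S : Finset ℕ) (hS : ∀ x ∈ S, 0 < x) (m : ℕ) (hm : m < #S) :
    ∑ w ∈ words S #S with #S - m ≤ (srw w).length, (X : ℕ[X]) ^ des w =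
      ∑ ρ ∈ words S (m + 1), X ^ weight S ρ := by
  rw [Finset.sum_filter]
  have e : words S #S = words S ((#S - (m + 1)) + (m + 1)) := by
    rw [Nat.sub_add_cancel hm]
  rw [e, sum_words_append]
  apply Finset.sum_congr rfl
  intro ρ hρ
  have hc := card_sdiff_of_mem_words hρ
  rw [mem_words] at hρ
  rcases ρ with _ | ⟨b, τ⟩
  · simp at hρ
  rw [weight, ← sum_fill]
  · rw [hc]
    have : #S - (m + 1) + 1 = #S - m := by omega
    rw [this]
  · simp
  · exact hS b (hρ.2.2 b (by simp))
  · intro x hx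
    exact hS x (Finset.mem_sdiff.1 hx).1

/-- Summing the weight over the possible first letters of `b τ`, for a fixed `τ`, reproduces the
weight of `τ` up to a term that depends on `τ` only through `des τ`. -/
theorem sum_weight_cons (S : Finset ℕ) (m : ℕ) (hm : m < #S) (τ : List ℕ)
    (hτ : τ ∈ words S m) :
    ∑ b ∈ S \ τ.toFinset, (X : ℕ[X]) ^ weight S (b :: τ) =
      hookPoly (#S - m) * X ^ des τ + X ^ weight S τ := by
  have hc := card_sdiff_of_mem_words hτ
  set B := S \ τ.toFinset with hBdef
  have hBne : B.Nonempty := Finset.card_pos.1 (by omega)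
  have hw : ∀ b, #{a ∈ S \ (b :: τ).toFinset | b < a} = #{a ∈ B | b < a} := by
    intro b
    congr 1
    ext a
    simp only [hBdef, Finset.mem_filter, Finset.mem_sdiff, List.mem_toFinset, List.mem_cons]
    constructor
    · rintro ⟨⟨h1, h2⟩, h3⟩
      exact ⟨⟨h1, fun h => h2 (Or.inr h)⟩, h3⟩
    · rintro ⟨⟨h1, h2⟩, h3⟩
      refine ⟨⟨h1, ?_⟩, h3⟩
      rintro (h | h)
      · omega
      · exact h2 h
  simp only [weight, hw]
  rcases τ with _ | ⟨x, τ⟩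
    -- no descent is created, as if the next letter exceeded every letter of `B`
  · have h := sum_prepend B (B.sup id + 1) ?_ hBne
    · have h' : ∀ b ∈ B, ¬ (B.sup id + 1 < b) := by
        intro b hb
        have : b ≤ B.sup id := Finset.le_sup (f := id) hb
        omega
      rw [Finset.filter_eq_empty_iff.2 h', Finset.card_empty, hc] at h
      simp only [des, pow_zero, mul_one, add_zero] at h ⊢
      rw [← h]
      apply Finset.sum_congr rfl
      intro b hb
      rw [if_neg (h' b hb), add_zero]
    · intro hb
      have : B.sup id + 1 ≤ B.sup id := Finset.le_sup (f := id) hb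
      omega
  · have h := sum_prepend B x (by simp [hBdef]) hBne
    rw [hc] at h
    simp only [pow_add]
    rw [← hBdef, ← add_mul, ← h, Finset.sum_mul]
    apply Finset.sum_congr rfl
    intro b hb
    rw [des, pow_add, pow_add]
    ring

theorem sum_weight_succ (S : Finset ℕ) (m : ℕ) (hm : m < #S) :
    ∑ ρ ∈ words S (m + 1), (X : ℕ[X]) ^ weight S ρ =
      ∑ T ∈ powersetCard (#S - m) S, hookPoly (#S - m) * desPoly (S \ T) +
        ∑ ρ ∈ words S m, X ^ weight S ρ := by
  rw [add_comm m 1, sum_words_append]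
  simp only [sum_words_one, List.singleton_append]
  rw [Finset.sum_congr rfl (sum_weight_cons S m hm), Finset.sum_add_distrib, ← Finset.mul_sum,
    ← Finset.mul_sum]
  congr 2
  rw [sum_words_powersetCard]
  refine Finset.sum_bij' (fun T _ => S \ T) (fun T _ => S \ T) ?_ ?_ ?_ ?_ ?_
  · intro T hT
    rw [mem_powersetCard] at hT ⊢
    exact ⟨Finset.sdiff_subset, by rw [Finset.card_sdiff_of_subset hT.1, hT.2]⟩
  · intro T hT
    rw [mem_powersetCard] at hT ⊢
    refine ⟨Finset.sdiff_subset, by rw [Finset.card_sdiff_of_subset hT.1, hT.2]; omega⟩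
  · intro T hT
    rw [mem_powersetCard] at hT
    exact Finset.sdiff_sdiff_eq_self hT.1
  · intro T hT
    rw [mem_powersetCard] at hT
    exact Finset.sdiff_sdiff_eq_self hT.1
  · intro T hT
    rw [mem_powersetCard] at hT
    rw [Finset.sdiff_sdiff_eq_self hT.1, desPoly, hT.2]

theorem sum_weight (S : Finset ℕ) (m : ℕ) (hm : m ≤ #S) :
    ∑ ρ ∈ words S m, (X : ℕ[X]) ^ weight S ρ =
      1 + ∑ l ∈ Ioc (#S - m) #S, ∑ T ∈ powersetCard l S, hookPoly l * desPoly (S \ T) := by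
  induction m with
  | zero => simp [words_zero, weight]
  | succ m ih =>
    rw [sum_weight_succ S m (by omega), ih (by omega)]
    have : Ioc (#S - (m + 1)) #S = insert (#S - m) (Ioc (#S - m) #S) := by
      ext x
      simp only [Finset.mem_Ioc, Finset.mem_insert]
      omega
    rw [this, Finset.sum_insert (by simp)]
    ring

open Classical in
theorem sum_le_srw' (S : Finset ℕ) (hS : ∀ x ∈ S, 0 < x) (L : ℕ) (hL : L ≤ #S) :
    ∑ w ∈ words S #S with L ≤ (srw w).length, (X : ℕ[X]) ^ des w =
      1 + ∑ l ∈ Icc L #S, ∑ T ∈ powersetCard l S, hookPoly l * desPoly (S \ T) := by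
  -- the general case is `1 ≤ L`; lengths `0` and `1` impose the same condition on non-empty words
  have pos : ∀ L, 1 ≤ L → L ≤ #S →
      ∑ w ∈ words S #S with L ≤ (srw w).length, (X : ℕ[X]) ^ des w =
      1 + ∑ l ∈ Icc L #S, ∑ T ∈ powersetCard l S, hookPoly l * desPoly (S \ T) := by
    intro L h1 hL
    have h := sum_le_srw S hS (#S - L) (by omega)
    rw [sum_weight S _ (by omega)] at h
    have e1 : #S - (#S - L) = L := by omega
    have e2 : Ioc (#S - (#S - L + 1)) #S = Icc L #S := by
      ext x
      simp only [Finset.mem_Ioc, Finset.mem_Icc]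
      omega
    rw [e1, e2] at h
    exact h
  rcases Nat.eq_zero_or_pos L with rfl | h
  · rcases Nat.eq_zero_or_pos #S with h0 | h0
    · rw [h0]
      simp [words_zero, des, hookPoly]
    · have h := pos 1 le_rfl h0
      have e : Icc 0 #S = insert 0 (Icc 1 #S) := by
        ext x
        simp only [Finset.mem_Icc, Finset.mem_insert]
        omega
      rw [e, Finset.sum_insert (by simp)]
      have e0 : ∑ T ∈ powersetCard 0 S, hookPoly 0 * desPoly (S \ T) = 0 := by simp [hookPoly]
      rw [e0, zero_add, ← h]
      congr 1
      apply Finset.filter_congr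
      intro w hw
      rw [mem_words] at hw
      refine iff_of_true (Nat.zero_le _) ?_
      rcases w with _ | ⟨a, _ | ⟨b, w⟩⟩
      · simp at hw
        omega
      · simp [srw, srwAux]
      · rw [srw, srwAux]
        split_ifs <;> simp
  · exact pos L h hL

/-! ### Comparison of the two recursions -/

theorem lecPoly_eq_desPoly (S : Finset ℕ) (hS : ∀ x ∈ S, 0 < x) : lecPoly S = desPoly S := by
  induction S using Finset.strongInduction with
  | H S ih =>
    have h1 := sum_le_lastHook S 0 (Nat.zero_le _)
    have h2 := sum_le_srw' S hS 0 (Nat.zero_le _)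
    simp only [Nat.zero_le, Finset.filter_true] at h1 h2
    rw [lecPoly, desPoly, h1, h2]
    refine congrArg (fun p => 1 + p) ?_
    refine Finset.sum_congr rfl fun l _ => Finset.sum_congr rfl fun T hT => ?_
    rw [mem_powersetCard] at hT
    rcases T.eq_empty_or_nonempty with rfl | hne
    · rw [← hT.2]
      simp [hookPoly]
    · rw [ih (S \ T) (Finset.sdiff_ssubset hT.1 hne)
        fun x hx => hS x (Finset.mem_sdiff.1 hx).1]

theorem coeff_sum_X_pow (F : Finset (List ℕ)) (f : List ℕ → ℕ) (i : ℕ) :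
    coeff (∑ w ∈ F, (X : ℕ[X]) ^ f w) i = #{w ∈ F | f w = i} := by
  rw [finsetSum_coeff, Finset.card_filter]
  apply Finset.sum_congr rfl
  intro w _
  rw [coeff_X_pow]
  simp only [eq_comm]

open Classical in
theorem card_lec_eq_card_des (S : Finset ℕ) (hS : ∀ x ∈ S, 0 < x) (L i : ℕ) (hL : L ≤ #S) :
    #{w ∈ words S #S | lec w = i ∧ L ≤ lastHook w} =
      #{w ∈ words S #S | des w = i ∧ L ≤ (srw w).length} := by
  have h : ∑ w ∈ words S #S with L ≤ lastHook w, (X : ℕ[X]) ^ lec w =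
      ∑ w ∈ words S #S with L ≤ (srw w).length, (X : ℕ[X]) ^ des w := by
    rw [sum_le_lastHook S L hL, sum_le_srw' S hS L hL]
    refine congrArg (fun p => 1 + p) ?_
    refine Finset.sum_congr rfl fun l _ => Finset.sum_congr rfl fun T hT => ?_
    rw [lecPoly_eq_desPoly _ fun x hx => hS x (Finset.mem_sdiff.1 hx).1]
  have h := congrArg (fun p => coeff p i) h
  rw [coeff_sum_X_pow, coeff_sum_X_pow, Finset.filter_filter, Finset.filter_filter] at h
  simp only [and_comm (a := lec _ = i), and_comm (a := des _ = i)]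
  exact h

/-! ### Permutations as words -/

theorem word_injective (n : ℕ) : Function.Injective (word (n := n)) := by
  intro σ τ h
  have h := List.ofFn_injective h
  ext i
  have := congrFun h i
  simpa using this

theorem word_mem (n : ℕ) (σ : Equiv.Perm (Fin n)) : word σ ∈ words (Finset.Icc 1 n) n := by
  rw [mem_words]
  refine ⟨?_, by simp [word], ?_⟩
  · rw [word, List.nodup_ofFn]
    intro i j h
    apply σ.injective
    ext
    simpa using h
  · intro x hx
    rw [word, List.mem_ofFn] at hx
    obtain ⟨i, rfl⟩ := hx
    rw [Finset.mem_Icc]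
    have := (σ i).2
    omega

theorem exists_word (n : ℕ) (l : List ℕ) (hl : l ∈ words (Finset.Icc 1 n) n) :
    ∃ σ : Equiv.Perm (Fin n), word σ = l := by
  rw [mem_words] at hl
  obtain ⟨h1, h2, h3⟩ := hl
  have hb : ∀ i : Fin n, 1 ≤ l[i.1] ∧ l[i.1] ≤ n := fun i =>
    Finset.mem_Icc.1 (h3 _ (List.getElem_mem _))
  let f : Fin n → Fin n := fun i => ⟨l[i.1] - 1, by have := hb i; omega⟩
  have hf : Function.Injective f := by
    intro i j h
    have h : l[i.1] - 1 = l[j.1] - 1 := congrArg Fin.val h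
    have hi := hb i
    have hj := hb j
    have : l[i.1] = l[j.1] := by omega
    exact Fin.ext ((h1.getElem_inj_iff).1 this)
  refine ⟨Equiv.ofBijective f (Finite.injective_iff_bijective.1 hf), ?_⟩
  apply List.ext_getElem
  · simp [word, h2]
  · intro i hi1 hi2
    have := hb ⟨i, by omega⟩
    simp only [word, List.getElem_ofFn, Equiv.ofBijective_apply, f]
    dsimp only at this
    omega

open Classical in
theorem card_perm (n : ℕ) (p : List ℕ → Prop) :
    Nat.card {σ : Equiv.Perm (Fin n) // p (word σ)} = #{w ∈ words (Finset.Icc 1 n) n | p w} := by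
  rw [Nat.card_eq_fintype_card, Fintype.card_subtype]
  refine Finset.card_bij (fun σ _ => word σ) ?_ ?_ ?_
  · intro σ hσ
    rw [Finset.mem_filter] at hσ ⊢
    exact ⟨word_mem n σ, hσ.2⟩
  · intro σ _ τ _ h
    exact word_injective n h
  · intro w hw
    rw [Finset.mem_filter] at hw
    obtain ⟨σ, rfl⟩ := exists_word n w hw.1
    exact ⟨σ, by simpa using hw.2, rfl⟩

theorem exists_isHookFact_iff (w : List ℕ) (hw : w.Nodup) (i L : ℕ) :
    (∃ γ hs, IsHookFact w γ hs ∧ lecVal hs = i ∧ L ≤ (hs.getLastD γ).length) ↔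
      lec w = i ∧ L ≤ lastHook w := by
  constructor
  · rintro ⟨γ, hs, h1, h2, h3⟩
    have h := hookFact_eq w γ hs h1
    rw [lec, lastHook, h]
    exact ⟨h2, h3⟩
  · rintro ⟨h1, h2⟩
    exact ⟨_, _, isHookFact_hookFact w hw, h1, h2⟩

end Paper

/-- the number of `σ ∈ S_n` with `lec σ = i` whose rightmost hook has length
at least `n - k` equals the number of `σ ∈ S_n` with `des σ = i` whose special reverse wave
has length at least `n - k`. -/
theorem Paper.statement10 (n k i : ℕ) :
    Nat.card {σ : Equiv.Perm (Fin n) //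
        ∃ γ hs, IsHookFact (word σ) γ hs ∧ lecVal hs = i ∧
          n - k ≤ (hs.getLastD γ).length} =
      Nat.card {σ : Equiv.Perm (Fin n) //
        des (word σ) = i ∧ n - k ≤ (srw (word σ)).length} := by
  classical
  have hc : (Finset.Icc 1 n).card = n := by simp
  rw [Paper.card_perm n (fun w => ∃ γ hs, Paper.IsHookFact w γ hs ∧ Paper.lecVal hs = i ∧
      n - k ≤ (hs.getLastD γ).length),
    Paper.card_perm n (fun w => Paper.des w = i ∧ n - k ≤ (Paper.srw w).length)]
  have h := Paper.card_lec_eq_card_des (Finset.Icc 1 n)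
    (fun x hx => (Finset.mem_Icc.1 hx).1) (n - k) i (by omega)
  rw [hc] at h
  convert h using 2
  · apply Finset.filter_congr
    intro w hw
    exact Paper.exists_isHookFact_iff w (Paper.mem_words.1 hw).1 i (n - k)
  · ext w
    simp only [Finset.mem_filter]
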